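/- arXiv:1106.1615 — 3 statements merged into one kernel-verified Lean document; each statement's English description precedes it below -/
import Mathlib

section
/- Let Σ be a complete simplicial rational fan in ℝⁿ (n ≥ 1) and let ρ = (ρ_δ)_{δ∈Σ¹} be nonnegative integers, not all zero. If ρ is strictly convex, then the epigraph C_ρ equals the convex cone generated by the vectors (δ, ρ_δ), δ ∈ Σ¹, and this generating set is irredundant: for every δ₀ ∈ Σ¹, the vector (δ₀, ρ_{δ₀}) does not belong to the convex cone generated by {(δ, ρ_δ) : δ ∈ Σ¹, δ ≠ δ₀}. -/
/-- A vector in `ℝⁿ` is integral if all its coordinates are integers. -/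
def IsIntegralVec {n : ℕ} (v : Fin n → ℝ) : Prop := ∀ i, ∃ m : ℤ, v i = (m : ℝ)

/-- The convex cone of all nonnegative linear combinations of a finite set of vectors. -/
def coneHullOf {n : ℕ} (s : Finset (Fin n → ℝ)) : Set (Fin n → ℝ) :=
  { x | ∃ c : (Fin n → ℝ) → ℝ, (∀ v, 0 ≤ c v) ∧ x = ∑ v ∈ s, c v • v }

/-- `F` is a face of the convex cone `σ`: it is cut out of `σ` by a linear functional
that is nonnegative on `σ`. -/
def IsFaceOf {n : ℕ} (F σ : Set (Fin n → ℝ)) : Prop :=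
  ∃ u : (Fin n → ℝ) →ₗ[ℝ] ℝ, (∀ x ∈ σ, 0 ≤ u x) ∧ F = {x ∈ σ | u x = 0}

/-- A complete simplicial rational fan in `ℝⁿ`: a finite nonempty collection of
simplicial rational cones, closed under taking faces, such that the intersection of any
two members is a face of each, and whose union is all of `ℝⁿ`. -/
structure IsCompleteFan {n : ℕ} (S : Set (Set (Fin n → ℝ))) : Prop where
  finite : S.Finite
  nonempty : S.Nonempty
  simplicial : ∀ σ ∈ S, ∃ s : Finset (Fin n → ℝ),
    (∀ v ∈ s, IsIntegralVec v) ∧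
    (LinearIndependent ℝ (fun v : s => (v : Fin n → ℝ))) ∧
    σ = coneHullOf s
  face_mem : ∀ σ ∈ S, ∀ F : Set (Fin n → ℝ), IsFaceOf F σ → F ∈ S
  inter_face : ∀ σ ∈ S, ∀ τ ∈ S, IsFaceOf (σ ∩ τ) σ ∧ IsFaceOf (σ ∩ τ) τ
  complete : ⋃₀ S = Set.univ

/-- A primitive integral vector: an integral vector that is not a positive integer
multiple (with factor ≠ 1) of another integral vector. -/
def IsPrimitiveVec {n : ℕ} (v : Fin n → ℝ) : Prop :=
  IsIntegralVec v ∧ ∀ (m : ℕ) (w : Fin n → ℝ), IsIntegralVec w → v = (m : ℝ) • w → m = 1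

/-- `Σ¹` : the set of primitive integral vectors spanning the one-dimensional members
of the fan `S`. -/
def fanRays {n : ℕ} (S : Set (Set (Fin n → ℝ))) : Set (Fin n → ℝ) :=
  { v | IsPrimitiveVec v ∧ {x | ∃ t : ℝ, 0 ≤ t ∧ x = t • v} ∈ S }

/-- The convex cone generated by a set `A` : all finite nonnegative linear combinations
of elements of `A`. -/
def coneGenBy {E : Type*} [AddCommMonoid E] [Module ℝ E] (A : Set E) : Set E :=
  { x | ∃ (t : Finset E) (c : E → ℝ), ↑t ⊆ A ∧ (∀ v, 0 ≤ c v) ∧ x = ∑ v ∈ t, c v • v }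

/-- The epigraph `C_ρ = {(x, α) : α ≥ f(x)}` of a function `f : ℝⁿ → ℝ`. -/
def epigraphOf {n : ℕ} (f : (Fin n → ℝ) → ℝ) : Set ((Fin n → ℝ) × ℝ) :=
  { p | f p.1 ≤ p.2 }

/-- `ρ` is convex: for every `n`-dimensional cone `σ` of the fan `S` (i.e. `σ` spans `ℝⁿ`),
the linear functional `l_σ` agreeing with `ρ` on the rays of `S` lying in `σ`
satisfies `l_σ ≤ f_ρ` everywhere. -/
def RhoIsConvex {n : ℕ} (S : Set (Set (Fin n → ℝ))) (ρ : (Fin n → ℝ) → ℕ)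
    (f : (Fin n → ℝ) → ℝ) : Prop :=
  ∀ σ ∈ S, Submodule.span ℝ σ = ⊤ →
    ∀ l : (Fin n → ℝ) →ₗ[ℝ] ℝ, (∀ δ ∈ fanRays S, δ ∈ σ → l δ = (ρ δ : ℝ)) →
      ∀ x, l x ≤ f x

/-- `ρ` is strictly convex: for every `n`-dimensional cone `σ` of the fan `S`,
`l_σ ≤ f_ρ` everywhere, with equality exactly on `σ`. -/
def RhoIsStrictlyConvex {n : ℕ} (S : Set (Set (Fin n → ℝ))) (ρ : (Fin n → ℝ) → ℕ)
    (f : (Fin n → ℝ) → ℝ) : Prop :=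
  ∀ σ ∈ S, Submodule.span ℝ σ = ⊤ →
    ∀ l : (Fin n → ℝ) →ₗ[ℝ] ℝ, (∀ δ ∈ fanRays S, δ ∈ σ → l δ = (ρ δ : ℝ)) →
      ∀ x, l x ≤ f x ∧ (l x = f x ↔ x ∈ σ)

theorem zero_not_prim {n : ℕ} {v : Fin n → ℝ} (h : IsPrimitiveVec v) : v ≠ 0 := by
  rintro rfl
  have := h.2 0 0 (fun i => ⟨0, by simp⟩) (by simp)
  omega

theorem prim_unique {n : ℕ} {v w : Fin n → ℝ} (hv : IsPrimitiveVec v) (hw : IsPrimitiveVec w)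
    (t : ℝ) (ht : 0 ≤ t) (h : w = t • v) : w = v := by
  choose b hb using hv.1
  choose a ha using hw.1
  have hv0 := zero_not_prim hv
  obtain ⟨i, hi⟩ := Function.ne_iff.mp hv0
  have hbi : (b i : ℝ) ≠ 0 := by rw [← hb i]; exact hi
  have htq : t = (((a i : ℚ) / (b i : ℚ) : ℚ) : ℝ) := by
    push_cast
    rw [eq_div_iff hbi, ← hb i, ← ha i, h]; simp
  generalize ((a i : ℚ) / (b i : ℚ) : ℚ) = q at htq
  have hq0 : 0 ≤ q := by rw [htq] at ht; exact_mod_cast ht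
  have hd0 : (q.den : ℝ) ≠ 0 := by exact_mod_cast q.den_nz
  have htd : t * q.den = q.num := by
    rw [htq]; exact_mod_cast Rat.mul_den_eq_num q
  have key : ∀ j, (q.den : ℤ) * a j = q.num * b j := by
    intro j
    have : (q.den : ℝ) * a j = q.num * b j := by
      rw [← ha j, ← hb j, h, ← htd]; simp; ring
    exact_mod_cast this
  have hdvd : ∀ j, (q.den : ℤ) ∣ b j := by
    intro j
    have h1 : (q.den : ℤ) ∣ q.num * b j := ⟨a j, (key j).symm⟩
    have hc : IsCoprime (q.den : ℤ) q.num := by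
      rw [Int.isCoprime_iff_gcd_eq_one, Int.gcd_comm]
      exact q.reduced
    exact hc.dvd_of_dvd_mul_left h1
  choose c hc using hdvd
  have hden : q.den = 1 := by
    refine hv.2 q.den (fun j => (c j : ℝ)) (fun j => ⟨c j, rfl⟩) ?_
    funext j
    simp [hb j, hc j]
  have hn0 : 0 ≤ q.num := Rat.num_nonneg.mpr hq0
  have htn : t = (q.num.toNat : ℝ) := by
    rw [hden] at htd
    have : ((q.num.toNat : ℤ) : ℝ) = q.num := by rw [Int.toNat_of_nonneg hn0]
    rw [Int.cast_natCast] at this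
    rw [this, ← htd]; simp
  have h1 := hw.2 q.num.toNat v hv.1 (by rw [← htn]; exact h)
  rw [h, htn, h1]; simp

theorem exists_prim {n : ℕ} {v : Fin n → ℝ} (hv : IsIntegralVec v) (h0 : v ≠ 0) :
    ∃ (k : ℝ) (p : Fin n → ℝ), 0 < k ∧ IsPrimitiveVec p ∧ v = k • p := by
  choose b hb using hv
  obtain ⟨i, hi⟩ := Function.ne_iff.mp h0
  have hbi : b i ≠ 0 := by
    intro h; apply hi; rw [hb i, h]; simp
  obtain ⟨g, hg, hg1⟩ := Finset.extract_gcd b (s := Finset.univ) ⟨i, Finset.mem_univ i⟩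
  have hgnn : 0 ≤ Finset.univ.gcd b := by
    rw [← Finset.normalize_gcd]
    exact Int.nonneg_of_normalize_eq_self (by simp)
  have hgne : Finset.univ.gcd b ≠ 0 := by
    intro h
    apply hbi; rw [hg i (Finset.mem_univ i), h]; simp
  refine ⟨(Finset.univ.gcd b : ℤ), fun j => (g j : ℝ), ?_, ⟨fun j => ⟨g j, rfl⟩, ?_⟩, ?_⟩
  · exact_mod_cast lt_of_le_of_ne hgnn hgne.symm
  · intro m w hw hm
    choose c hc using hw
    have : (m : ℤ) ∣ Finset.univ.gcd g := by
      apply Finset.dvd_gcd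
      intro j _
      refine ⟨c j, ?_⟩
      have := congrFun hm j
      simp only [Pi.smul_apply, smul_eq_mul, hc j] at this
      exact_mod_cast this
    rw [hg1] at this
    have h2 := Int.eq_one_of_dvd_one (by positivity) this
    exact_mod_cast h2
  · funext j
    have := hg j (Finset.mem_univ j)
    rw [hb j]
    simp only [Pi.smul_apply, smul_eq_mul]
    exact_mod_cast this

theorem exists_functional {n : ℕ} {s : Finset (Fin n → ℝ)}
    (hs : LinearIndependent ℝ (fun v : s => (v : Fin n → ℝ))) (g : (Fin n → ℝ) → ℝ) :
    ∃ u : (Fin n → ℝ) →ₗ[ℝ] ℝ, ∀ w ∈ s, u w = g w := by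
  obtain ⟨u, hu⟩ := LinearMap.exists_extend ((Module.Basis.span hs).constr ℝ (fun w => g w))
  refine ⟨u, fun w hw => ?_⟩
  have h1 : ((Module.Basis.span hs ⟨w, hw⟩ : Submodule.span ℝ _) : Fin n → ℝ) = w := by
    rw [Module.Basis.span_apply]
  have h2 := LinearMap.congr_fun hu (Module.Basis.span hs ⟨w, hw⟩)
  rw [Module.Basis.constr_basis] at h2
  simpa [h1] using h2

theorem mem_coneHull {n : ℕ} {s : Finset (Fin n → ℝ)} {v : Fin n → ℝ} (hv : v ∈ s)
    {t : ℝ} (ht : 0 ≤ t) : t • v ∈ coneHullOf s := by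
  classical
  refine ⟨fun w => if w = v then t else 0, fun w => by dsimp only; split_ifs <;> simp [ht], ?_⟩
  simp [ite_smul, hv]

theorem ray_face {n : ℕ} {s : Finset (Fin n → ℝ)}
    (hs : LinearIndependent ℝ (fun v : s => (v : Fin n → ℝ))) {v : Fin n → ℝ} (hv : v ∈ s) :
    IsFaceOf {x | ∃ t : ℝ, 0 ≤ t ∧ x = t • v} (coneHullOf s) := by
  classical
  obtain ⟨u, hu⟩ := exists_functional hs (fun w => if w = v then 0 else 1)
  have huc : ∀ c : (Fin n → ℝ) → ℝ, u (∑ w ∈ s, c w • w) =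
      ∑ w ∈ s, c w * (if w = v then 0 else 1) := by
    intro c
    rw [map_sum]
    exact Finset.sum_congr rfl fun w hw => by rw [map_smul, hu w hw, smul_eq_mul]
  refine ⟨u, ?_, ?_⟩
  · rintro x ⟨c, hc, rfl⟩
    rw [huc]
    exact Finset.sum_nonneg fun w _ => mul_nonneg (hc w) (by split_ifs <;> norm_num)
  · ext x
    constructor
    · rintro ⟨t, ht, rfl⟩
      exact ⟨mem_coneHull hv ht, by rw [map_smul, hu v hv]; simp⟩
    · rintro ⟨⟨c, hc, rfl⟩, hx⟩
      rw [huc, Finset.sum_eq_zero_iff_of_nonneg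
        (fun w _ => mul_nonneg (hc w) (by split_ifs <;> norm_num))] at hx
      refine ⟨c v, hc v, ?_⟩
      apply Finset.sum_eq_single_of_mem v hv
      intro w hw hne
      have := hx w hw
      simp [hne] at this
      simp [this]

theorem isClosed_coneHull {n : ℕ} {s : Finset (Fin n → ℝ)}
    (hs : LinearIndependent ℝ (fun v : s => (v : Fin n → ℝ))) : IsClosed (coneHullOf s) := by
  classical
  let L : (s → ℝ) →ₗ[ℝ] (Fin n → ℝ) := Fintype.linearCombination ℝ (fun v : s => (v : Fin n → ℝ))
  have hL : Function.Injective L := by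
    exact linearIndependent_iff_injective_fintypeLinearCombination.mp hs
  have hemb := LinearMap.isClosedEmbedding_of_injective (LinearMap.ker_eq_bot.mpr hL)
  have hcl : IsClosed {c : s → ℝ | 0 ≤ c} := isClosed_Ici
  have := hemb.isClosedMap _ hcl
  convert this using 1
  ext x
  constructor
  · rintro ⟨c, hc, rfl⟩
    refine ⟨fun w => c w, fun w => hc w, ?_⟩
    simp only [L, Fintype.linearCombination_apply]
    exact Finset.sum_coe_sort s (fun w => c w • w)
  · rintro ⟨c, hc, rfl⟩
    refine ⟨fun w => if h : w ∈ s then c ⟨w, h⟩ else 0, ?_, ?_⟩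
    · intro w; dsimp only; split_ifs
      · exact hc _
      · exact le_rfl
    · simp only [L, Fintype.linearCombination_apply]
      rw [← Finset.sum_coe_sort s]
      exact Finset.sum_congr rfl fun w _ => by simp

theorem exists_full {n : ℕ} {S : Set (Set (Fin n → ℝ))} (hS : IsCompleteFan S)
    (x : Fin n → ℝ) : ∃ σ ∈ S, Submodule.span ℝ σ = ⊤ ∧ x ∈ σ := by
  let A := {σ ∈ S | Submodule.span ℝ σ = ⊤}
  let B := {σ ∈ S | Submodule.span ℝ σ ≠ ⊤}
  have hA : IsClosed (⋃₀ A) := by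
    rw [Set.sUnion_eq_biUnion]; apply Set.Finite.isClosed_biUnion (hS.finite.subset (fun _ h => h.1))
    rintro σ ⟨hσ, -⟩
    obtain ⟨s, -, hs, rfl⟩ := hS.simplicial σ hσ
    exact isClosed_coneHull hs
  have hD : Dense (⋂ σ ∈ B, ((Submodule.span ℝ σ : Set (Fin n → ℝ)))ᶜ) := by
    apply dense_biInter_of_isOpen
    · intro σ _
      exact (Submodule.closed_of_finiteDimensional _).isOpen_compl
    · exact (hS.finite.subset (fun _ h => h.1)).countable
    · rintro σ ⟨-, hσ⟩
      rw [← interior_eq_empty_iff_dense_compl]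
      by_contra hne
      exact hσ (Submodule.eq_top_of_nonempty_interior' _ (Set.nonempty_iff_ne_empty.mpr hne))
  have hsub : (⋂ σ ∈ B, ((Submodule.span ℝ σ : Set (Fin n → ℝ)))ᶜ) ⊆ ⋃₀ A := by
    intro y hy
    have hyS : y ∈ ⋃₀ S := by rw [hS.complete]; trivial
    obtain ⟨σ, hσ, hyσ⟩ := hyS
    by_cases h : Submodule.span ℝ σ = ⊤
    · exact ⟨σ, ⟨hσ, h⟩, hyσ⟩
    · exfalso
      simp only [Set.mem_iInter] at hy
      exact hy σ ⟨hσ, h⟩ (Submodule.subset_span hyσ)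
  have huniv : ⋃₀ A = Set.univ := by
    rw [← hA.closure_eq]; exact (hD.mono hsub).closure_eq
  have hx : x ∈ ⋃₀ A := by rw [huniv]; trivial
  obtain ⟨σ, ⟨h1, h2⟩, h3⟩ := hx
  exact ⟨σ, h1, h2, h3⟩

theorem coneGen_zero {E : Type*} [AddCommMonoid E] [Module ℝ E] (A : Set E) :
    (0 : E) ∈ coneGenBy A := ⟨∅, 0, by simp, by simp, by simp⟩

theorem coneGen_add {E : Type*} [AddCommMonoid E] [Module ℝ E] {A : Set E} {x y : E}
    (hx : x ∈ coneGenBy A) (hy : y ∈ coneGenBy A) : x + y ∈ coneGenBy A := by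
  classical
  obtain ⟨t, c, ht, hc, rfl⟩ := hx
  obtain ⟨t', c', ht', hc', rfl⟩ := hy
  refine ⟨t ∪ t', fun v => (if v ∈ t then c v else 0) + (if v ∈ t' then c' v else 0), ?_, ?_, ?_⟩
  · simp [ht, ht']
  · intro v
    have := hc v
    have := hc' v
    dsimp only
    split_ifs <;> simp <;> positivity
  · simp only [add_smul, Finset.sum_add_distrib, ite_smul, zero_smul, ← Finset.sum_filter]
    congr 2 <;> (congr 1; ext v; simp; try tauto)

theorem coneGen_smul {E : Type*} [AddCommMonoid E] [Module ℝ E] {A : Set E} {x : E}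
    (hx : x ∈ coneGenBy A) {r : ℝ} (hr : 0 ≤ r) : r • x ∈ coneGenBy A := by
  obtain ⟨t, c, ht, hc, rfl⟩ := hx
  exact ⟨t, fun v => r * c v, ht, fun v => mul_nonneg hr (hc v),
    by simp [Finset.smul_sum, mul_smul]⟩

theorem coneGen_self {E : Type*} [AddCommMonoid E] [Module ℝ E] {A : Set E} {x : E}
    (hx : x ∈ A) : x ∈ coneGenBy A :=
  ⟨{x}, fun _ => 1, by simpa using hx, by simp, by simp⟩

theorem coneGen_sum {E ι : Type*} [AddCommMonoid E] [Module ℝ E] {A : Set E} (s : Finset ι)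
    (g : ι → E) (h : ∀ i ∈ s, g i ∈ coneGenBy A) : ∑ i ∈ s, g i ∈ coneGenBy A :=
  Finset.sum_induction g (· ∈ coneGenBy A) (fun _ _ => coneGen_add) (coneGen_zero A) h

/-- For a complete simplicial rational fan `S` in `ℝⁿ` (`n ≥ 1`) and
nonnegative integers `ρ_δ`, not all zero: if `ρ` is strictly convex, then the epigraph
`C_ρ` equals the convex cone generated by the vectors `(δ, ρ_δ)`, `δ ∈ Σ¹`, and this
generating set is irredundant: no `(δ₀, ρ_{δ₀})` lies in the cone generated by the
remaining vectors. -/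
theorem statement5 {n : ℕ} (hn : 1 ≤ n) (S : Set (Set (Fin n → ℝ)))
    (hS : IsCompleteFan S) (ρ : (Fin n → ℝ) → ℕ)
    (hρ : ∃ δ ∈ fanRays S, ρ δ ≠ 0)
    (f : (Fin n → ℝ) → ℝ)
    (hflin : ∀ σ ∈ S, ∃ l : (Fin n → ℝ) →ₗ[ℝ] ℝ, ∀ x ∈ σ, f x = l x)
    (hfval : ∀ δ ∈ fanRays S, f δ = (ρ δ : ℝ))
    (hconv : RhoIsStrictlyConvex S ρ f) :
    epigraphOf f = coneGenBy ((fun δ => (δ, (ρ δ : ℝ))) '' fanRays S) ∧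
    ∀ δ₀ ∈ fanRays S,
      (δ₀, (ρ δ₀ : ℝ)) ∉ coneGenBy ((fun δ => (δ, (ρ δ : ℝ))) '' (fanRays S \ {δ₀})) := by
  have hfull := fun x => exists_full hS x
  have hgraph : ∀ x, (x, f x) ∈ coneGenBy ((fun δ => (δ, (ρ δ : ℝ))) '' fanRays S) := by
    intro x
    obtain ⟨σ, hσ, -, hx⟩ := hfull x
    obtain ⟨l, hl⟩ := hflin σ hσ
    obtain ⟨s, hint, hs, rfl⟩ := hS.simplicial σ hσ
    rw [hl x hx]
    obtain ⟨c, hc, rfl⟩ := hx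
    have heq : ((∑ v ∈ s, c v • v, l (∑ v ∈ s, c v • v)) : (Fin n → ℝ) × ℝ) =
        ∑ v ∈ s, c v • (v, l v) := by
      ext <;> simp [Prod.fst_sum, Prod.snd_sum]
    rw [heq]
    refine coneGen_sum _ _ fun v hv => coneGen_smul ?_ (hc v)
    obtain ⟨k, p, hk, hp, hvp⟩ := exists_prim (hint v hv)
      (by have := hs.ne_zero ⟨v, hv⟩; simpa using this)
    have hray : {x | ∃ t : ℝ, 0 ≤ t ∧ x = t • p} = {x | ∃ t : ℝ, 0 ≤ t ∧ x = t • v} := by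
      ext y
      constructor
      · rintro ⟨t, ht, rfl⟩
        refine ⟨t / k, by positivity, ?_⟩
        rw [hvp, smul_smul]; congr 1; field_simp
      · rintro ⟨t, ht, rfl⟩
        exact ⟨t * k, by positivity, by rw [hvp, smul_smul]⟩
    have hpS : p ∈ fanRays S := ⟨hp, by
      rw [hray]; exact hS.face_mem _ hσ _ (ray_face hs hv)⟩
    have hpσ : p ∈ coneHullOf s := by
      have : p = k⁻¹ • v := by rw [hvp, smul_smul, inv_mul_cancel₀ hk.ne', one_smul]
      rw [this]; exact mem_coneHull hv (by positivity)
    have : ((v, l v) : (Fin n → ℝ) × ℝ) = k • (p, (ρ p : ℝ)) := by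
      rw [← hfval p hpS, hl p hpσ, hvp]; ext <;> simp
    rw [this]
    exact coneGen_smul (coneGen_self (Set.mem_image_of_mem _ hpS)) hk.le
  have hle : ∀ σ ∈ S, Submodule.span ℝ σ = ⊤ → ∀ l : (Fin n → ℝ) →ₗ[ℝ] ℝ,
      (∀ x ∈ σ, f x = l x) → ∀ x, l x ≤ f x ∧ (l x = f x ↔ x ∈ σ) :=
    fun σ hσ hsp l hl => hconv σ hσ hsp l fun δ hδ hδσ => by rw [← hl δ hδσ, hfval δ hδ]
  constructor
  · ext ⟨x, α⟩
    constructor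
    · intro h
      have h : f x ≤ α := h
      obtain ⟨δ, hδ, hδ0⟩ := hρ
      have hpos : 0 < (ρ δ : ℝ) := by exact_mod_cast Nat.pos_of_ne_zero hδ0
      have h1 := coneGen_add (coneGen_self (A := (fun δ => (δ, (ρ δ : ℝ))) '' fanRays S)
        (Set.mem_image_of_mem _ hδ)) (hgraph (-δ))
      have hnn : ∀ y, 0 ≤ f y := by
        intro y
        obtain ⟨t, c, ht, hc, hy⟩ := hgraph y
        have h2 := congrArg Prod.snd hy
        rw [Prod.snd_sum] at h2
        simp only at h2
        rw [h2]
        refine Finset.sum_nonneg fun v hv => ?_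
        obtain ⟨d, -, rfl⟩ := ht hv
        exact mul_nonneg (hc _) (by simp)
      set r := (ρ δ : ℝ) + f (-δ) with hr
      have hrpos : 0 < r := by have := hnn (-δ); linarith
      have h2 := coneGen_add (hgraph x) (coneGen_smul h1 (r := (α - f x) / r)
        (div_nonneg (by linarith) hrpos.le))
      convert h2 using 1
      ext
      · simp
      · simp only [Prod.snd_add, Prod.smul_snd, smul_eq_mul]
        rw [← hr, div_mul_cancel₀ _ hrpos.ne']; ring
    · rintro ⟨t, c, ht, hc, hx⟩
      obtain ⟨σ, hσ, hsp, hxσ⟩ := hfull x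
      obtain ⟨l, hl⟩ := hflin σ hσ
      change f x ≤ α
      have h1 := congrArg Prod.fst hx
      have h2 := congrArg Prod.snd hx
      rw [Prod.fst_sum] at h1
      rw [Prod.snd_sum] at h2
      simp only at h1 h2
      rw [hl x hxσ, h1, h2, map_sum]
      refine Finset.sum_le_sum fun v hv => ?_
      obtain ⟨d, hd, rfl⟩ := ht hv
      simp only [Prod.smul_fst, Prod.smul_snd, map_smul, smul_eq_mul]
      refine mul_le_mul_of_nonneg_left ?_ (hc _)
      rw [← hfval d hd]
      exact (hle σ hσ hsp l hl d).1
  · rintro δ₀ hδ₀ ⟨t, c, ht, hc, hx⟩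
    obtain ⟨σ, hσ, hsp, hxσ⟩ := hfull δ₀
    obtain ⟨l, hl⟩ := hflin σ hσ
    have h1 := congrArg Prod.fst hx
    have h2 := congrArg Prod.snd hx
    rw [Prod.fst_sum] at h1
    rw [Prod.snd_sum] at h2
    simp only [Prod.smul_fst, Prod.smul_snd, smul_eq_mul] at h1 h2
    have h3 : ∑ v ∈ t, c v * (v.2 - l v.1) = 0 := by
      simp only [mul_sub, Finset.sum_sub_distrib]
      rw [← h2, ← hfval δ₀ hδ₀, hl δ₀ hxσ, sub_eq_zero]
      conv_lhs => rw [h1]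
      simp
    have hnn : ∀ v ∈ t, 0 ≤ c v * (v.2 - l v.1) := by
      intro v hv
      obtain ⟨d, hd, rfl⟩ := ht hv
      refine mul_nonneg (hc _) ?_
      have := (hle σ hσ hsp l hl d).1
      rw [hfval d hd.1] at this
      simpa using this
    rw [Finset.sum_eq_zero_iff_of_nonneg hnn] at h3
    have hin : ∀ v ∈ t, c v ≠ 0 → v.1 ∈ σ := by
      intro v hv hcv
      have h4 := h3 v hv
      obtain ⟨d, hd, rfl⟩ := ht hv
      have h5 := (mul_eq_zero.mp h4).resolve_left hcv
      apply (hle σ hσ hsp l hl d).2.mp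
      rw [hfval d hd.1]
      simp only at h5
      linarith
    obtain ⟨u, hu, hF⟩ := (hS.inter_face σ hσ _ hδ₀.2).1
    have hmem : ∀ y, (y ∈ σ ∧ ∃ r : ℝ, 0 ≤ r ∧ y = r • δ₀) ↔ (y ∈ σ ∧ u y = 0) := by
      intro y
      exact Set.ext_iff.mp hF y
    have hu0 : u δ₀ = 0 := ((hmem δ₀).mp ⟨hxσ, 1, by simp, by simp⟩).2
    have h6 : ∑ v ∈ t, c v * u v.1 = 0 := by
      rw [← hu0]
      conv_rhs => rw [h1]
      simp
    have hnn2 : ∀ v ∈ t, 0 ≤ c v * u v.1 := by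
      intro v hv
      by_cases h : c v = 0
      · simp [h]
      · exact mul_nonneg (hc v) (hu _ (hin v hv h))
    rw [Finset.sum_eq_zero_iff_of_nonneg hnn2] at h6
    have hall : ∀ v ∈ t, c v = 0 := by
      intro v hv
      by_contra hcv
      have h7 := (mul_eq_zero.mp (h6 v hv)).resolve_left hcv
      obtain ⟨-, r, hr, hvr⟩ := (hmem v.1).mpr ⟨hin v hv hcv, h7⟩
      obtain ⟨d, hd, rfl⟩ := ht hv
      exact hd.2 (prim_unique hδ₀.1 hd.1.1 r hr hvr)
    apply zero_not_prim hδ₀.1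
    rw [h1]
    exact Finset.sum_eq_zero fun v hv => by rw [hall v hv, zero_smul]
end

section
/- Let m ≥ 2, let n_1, …, n_m be positive real numbers, and let ρ_1, …, ρ_m be nonnegative real numbers with Σ_k n_k ρ_k > 0. Let H := {y ∈ ℝ^m : Σ_i n_i y_i = 0} and P := {y ∈ H : y_i ≥ −ρ_i for all i}. For 1 ≤ j ≤ m define a_j ∈ ℝ^m by (a_j)_i = −ρ_i for i ≠ j and (a_j)_j = (Σ_{k ≠ j} n_k ρ_k)/n_j. Then P is the convex hull of {a_1, …, a_m}. Moreover, if all n_i and ρ_i are integers, then all the points a_1, …, a_m lie in ℤ^m if and only if n_j divides Σ_k n_k ρ_k for every j. -/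
/-- Let `m ≥ 2`, `n_i > 0`, `ρ_i ≥ 0` with `Σ n_k ρ_k > 0`. Let
`P = {y : Σ n_i y_i = 0, y_i ≥ −ρ_i}` and let `a_j` have coordinates `−ρ_i` for `i ≠ j`
and `(Σ_{k ≠ j} n_k ρ_k)/n_j` at `j`. Then `P = conv{a_1, …, a_m}`; moreover, if all
`n_i, ρ_i` are integers, then all `a_j` are lattice points iff `n_j ∣ Σ n_k ρ_k` for
every `j`. -/
theorem statement14 {m : ℕ} (hm : 2 ≤ m) (nn ρ : Fin m → ℝ)
    (hn : ∀ i, 0 < nn i) (hρ : ∀ i, 0 ≤ ρ i)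
    (hsum : 0 < ∑ k, nn k * ρ k)
    (P : Set (Fin m → ℝ))
    (hP : P = {y | (∑ i, nn i * y i = 0) ∧ ∀ i, -ρ i ≤ y i})
    (a : Fin m → Fin m → ℝ)
    (ha : ∀ j i, a j i =
      if i = j then (∑ k ∈ Finset.univ.erase j, nn k * ρ k) / nn j else -ρ i) :
    P = convexHull ℝ (Set.range a) ∧
    ∀ N R : Fin m → ℤ, (∀ i, nn i = (N i : ℝ)) → (∀ i, ρ i = (R i : ℝ)) →
      ((∀ j i, ∃ z : ℤ, a j i = (z : ℝ)) ↔ ∀ j, N j ∣ ∑ k, N k * R k) := by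
  classical
  obtain ⟨S, hS⟩ : ∃ S, S = ∑ k, nn k * ρ k := ⟨_, rfl⟩
  rw [← hS] at hsum
  have ha' : ∀ j i, a j i = -ρ i + if i = j then S / nn j else 0 := by
    intro j i
    rw [ha]
    split_ifs with h
    · subst h
      have h1 := Finset.add_sum_erase Finset.univ (fun k => nn k * ρ k) (Finset.mem_univ i)
      have h2 := (hn i).ne'
      rw [hS, ← h1]
      field_simp
      ring
    · simp
  refine ⟨?_, ?_⟩
  · apply Set.Subset.antisymm
    · intro y hy
      rw [hP] at hy
      obtain ⟨hy1, hy2⟩ := hy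
      have hw1 : ∑ j, nn j * (y j + ρ j) / S = 1 := by
        rw [← Finset.sum_div]
        simp only [mul_add, Finset.sum_add_distrib]
        rw [hy1, ← hS, zero_add, div_self hsum.ne']
      have hyeq : y = ∑ j, (nn j * (y j + ρ j) / S) • a j := by
        funext i
        simp only [Finset.sum_apply, Pi.smul_apply, smul_eq_mul, ha', mul_add (_ / S),
          Finset.sum_add_distrib, ← Finset.sum_mul, mul_ite, mul_zero, Finset.sum_ite_eq,
          Finset.mem_univ, if_true]
        rw [hw1]
        have h2 := (hn i).ne'
        have h3 := hsum.ne'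
        field_simp
        ring
      rw [hyeq]
      refine (convex_convexHull ℝ (Set.range a)).sum_mem ?_ hw1 ?_
      · intro j _
        exact div_nonneg (mul_nonneg (hn j).le (by linarith [hy2 j])) hsum.le
      · intro j _
        exact subset_convexHull ℝ _ ⟨j, rfl⟩
    · apply convexHull_min
      · rintro _ ⟨j, rfl⟩
        rw [hP]
        refine ⟨?_, ?_⟩
        · have h2 := (hn j).ne'
          simp only [ha', mul_add, Finset.sum_add_distrib, mul_ite, mul_zero,
            Finset.sum_ite_eq', Finset.mem_univ, if_true, mul_neg, Finset.sum_neg_distrib]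
          rw [← hS]
          field_simp
          ring
        · intro i
          rw [ha']
          have := div_nonneg hsum.le (hn j).le
          split_ifs <;> linarith
      · rw [hP]
        intro x hx y hy s t hs ht hst
        refine ⟨?_, ?_⟩
        · have : ∀ i, nn i * (s • x + t • y) i = s * (nn i * x i) + t * (nn i * y i) := by
            intro i
            simp only [Pi.add_apply, Pi.smul_apply, smul_eq_mul]
            ring
          simp only [this, Finset.sum_add_distrib, ← Finset.mul_sum]
          rw [hx.1, hy.1]
          simp
        · intro i
          simp only [Pi.add_apply, Pi.smul_apply, smul_eq_mul]
          have h1 := mul_le_mul_of_nonneg_left (hx.2 i) hs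
          have h2 := mul_le_mul_of_nonneg_left (hy.2 i) ht
          have h3 : s * -ρ i + t * -ρ i = -ρ i := by rw [← add_mul, hst, one_mul]
          linarith
  · intro N R hN hR
    have hSZ : S = ((∑ k, N k * R k : ℤ) : ℝ) := by
      rw [hS]
      push_cast
      simp only [hN, hR]
    constructor
    · intro h j
      obtain ⟨z, hz⟩ := h j j
      rw [ha', if_pos rfl, hR] at hz
      refine ⟨z + R j, ?_⟩
      have h2 := (hn j).ne'
      have h3 : S = nn j * (z + R j) := by
        rw [← hz]
        field_simp
        ring
      rw [hSZ, hN] at h3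
      exact_mod_cast h3
    · intro h j i
      obtain ⟨c, hc⟩ := h j
      have h2 := (hn j).ne'
      have h3 : S / nn j = c := by
        rw [hSZ, hc, div_eq_iff h2, hN]
        push_cast
        ring
      rw [ha', hR, h3]
      split_ifs
      · exact ⟨-R i + c, by push_cast; ring⟩
      · exact ⟨-R i, by push_cast; ring⟩
end

section
/- Let C ⊆ ℝⁿ × ℝ be a closed convex cone, let v ∈ ℝⁿ be such that (v, 1) lies in the dual cone C*, and let τ := {z ∈ C : ⟨z, (v,1)⟩ = 0} be the face of C annihilated by (v,1). Assume that the dual face of τ is exactly the ray through (v,1), i.e. {y ∈ C* : ⟨t, y⟩ = 0 for all t ∈ τ} = {λ·(v,1) : λ ≥ 0}. Then for every t in the relative interior of τ and every x ∈ ℝⁿ with (x, 1) ∈ C*, one has ⟨t, (x,1)⟩ ≥ 0, with equality if and only if x = v. -/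
/-- The product inner product on `ℝⁿ × ℝ`:
`⟨(x, α), (y, β)⟩ = ⟨x, y⟩ + α·β` with the standard inner product on `ℝⁿ`. -/
def pairWith {n : ℕ} (z y : (Fin n → ℝ) × ℝ) : ℝ :=
  (∑ i, z.1 i * y.1 i) + z.2 * y.2

/-- A point of the relative interior can be pushed slightly away from any other point. -/
theorem exists_push {E : Type*} [NormedAddCommGroup E] [NormedSpace ℝ E] {S : Set E} {t s : E}
    (ht : t ∈ intrinsicInterior ℝ S) (hs : s ∈ S) :
    ∃ e : ℝ, 0 < e ∧ t + e • (t - s) ∈ S := by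
  obtain ⟨t', ht', rfl⟩ := mem_intrinsicInterior.1 ht
  have hmem : ∀ e : ℝ, (t' : E) + e • ((t' : E) - s) ∈ affineSpan ℝ S := by
    intro e
    have h := AffineMap.lineMap_mem (-e) t'.2 (subset_affineSpan ℝ S hs)
    have h2 : AffineMap.lineMap (t' : E) s (-e) = (t' : E) + e • ((t' : E) - s) := by
      rw [AffineMap.lineMap_apply_module']
      module
    rwa [h2] at h
  let g : ℝ → affineSpan ℝ S := fun e => ⟨(t' : E) + e • ((t' : E) - s), hmem e⟩
  have hg : Continuous g := by
    apply Continuous.subtype_mk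
    fun_prop
  have hg0 : g 0 = t' := by
    apply Subtype.ext
    simp [g]
  have hev : ∀ᶠ e in nhds (0 : ℝ), g e ∈ interior ((↑) ⁻¹' S : Set (affineSpan ℝ S)) := by
    apply hg.continuousAt.eventually_mem
    rw [hg0]
    exact isOpen_interior.mem_nhds ht'
  obtain ⟨d, hd, hball⟩ := Metric.eventually_nhds_iff.1 hev
  refine ⟨d / 2, by positivity, ?_⟩
  have h := interior_subset (hball (y := d / 2) (by
    rw [Real.dist_eq, sub_zero, abs_of_pos (by positivity)]; linarith))
  exact h

theorem pairWith_push {n : ℕ} (t s y : (Fin n → ℝ) × ℝ) (e : ℝ) :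
    pairWith (t + e • (t - s)) y = pairWith t y + e * (pairWith t y - pairWith s y) := by
  have h : ∑ i, (t + e • (t - s)).1 i * y.1 i =
      ∑ i, t.1 i * y.1 i + e * (∑ i, t.1 i * y.1 i - ∑ i, s.1 i * y.1 i) := by
    rw [← Finset.sum_sub_distrib, Finset.mul_sum, ← Finset.sum_add_distrib]
    refine Finset.sum_congr rfl fun i _ => ?_
    simp
    ring
  unfold pairWith
  rw [h]
  simp
  ring

/-- Let `C ⊆ ℝⁿ × ℝ` be a closed convex cone, `v ∈ ℝⁿ` with
`(v, 1) ∈ C*`, and `τ = {z ∈ C : ⟨z, (v,1)⟩ = 0}` the face of `C` annihilated by `(v,1)`.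
If the dual face of `τ` is exactly the ray through `(v, 1)`, then for every `t` in the
relative interior of `τ` and every `x` with `(x, 1) ∈ C*`, one has `⟨t, (x,1)⟩ ≥ 0`, with
equality iff `x = v`. -/
theorem statement15 {n : ℕ} (C : Set ((Fin n → ℝ) × ℝ))
    (hclosed : IsClosed C) (hconv : Convex ℝ C)
    (hcone : ∀ z ∈ C, ∀ t : ℝ, 0 ≤ t → t • z ∈ C)
    (v : Fin n → ℝ) (hv : ∀ z ∈ C, 0 ≤ pairWith z (v, 1))
    (τ : Set ((Fin n → ℝ) × ℝ)) (hτ : τ = {z ∈ C | pairWith z (v, 1) = 0})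
    (hdualface :
      {y | (∀ z ∈ C, 0 ≤ pairWith z y) ∧ ∀ t ∈ τ, pairWith t y = 0} =
        {y | ∃ l : ℝ, 0 ≤ l ∧ y = l • ((v, 1) : (Fin n → ℝ) × ℝ)}) :
    ∀ t ∈ intrinsicInterior ℝ τ, ∀ x : Fin n → ℝ,
      (∀ z ∈ C, 0 ≤ pairWith z (x, 1)) →
        0 ≤ pairWith t (x, 1) ∧ (pairWith t (x, 1) = 0 ↔ x = v) := by
  intro t ht x hx
  have htτ : t ∈ τ := intrinsicInterior_subset ht
  have hτC : ∀ z ∈ τ, z ∈ C := by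
    intro z hz
    rw [hτ] at hz
    exact hz.1
  refine ⟨hx t (hτC t htτ), ?_, ?_⟩
  · intro h0
    have hmem : ((x, 1) : (Fin n → ℝ) × ℝ) ∈
        {y | (∀ z ∈ C, 0 ≤ pairWith z y) ∧ ∀ t ∈ τ, pairWith t y = 0} := by
      refine ⟨hx, fun s hs => ?_⟩
      obtain ⟨e, he, hes⟩ := exists_push ht hs
      have h1 := hx _ (hτC _ hes)
      rw [pairWith_push, h0] at h1
      have h2 := hx s (hτC s hs)
      nlinarith
    rw [hdualface] at hmem
    obtain ⟨l, -, hl⟩ := hmem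
    have hl1 : (1 : ℝ) = l := by simpa using congrArg Prod.snd hl
    have hl2 : x = l • v := by simpa using congrArg Prod.fst hl
    rw [hl2, ← hl1, one_smul]
  · rintro rfl
    rw [hτ] at htτ
    exact htτ.2
end
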